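/- Let n ≥ 2 be an integer. Let X₁ and X₂ be independent real random variables on a probability space, where X₁ has probability density f₁(x) = (n−1)(1−x)^{n−2} on [0,1] and 0 elsewhere (the Beta(1, n−1) distribution), and X₂ has probability density f₂(t) = t^{n−1} e^{−t/2} / (2^n Γ(n)) on [0,∞) and 0 elsewhere (the chi-squared distribution with 2n degrees of freedom). Then the product X₁ · X₂ has probability density (1/2) e^{−x/2} on [0,∞), i.e., X₁ · X₂ is exponentially distributed with rate 1/2. -/

import Mathlib

open MeasureTheory ProbabilityTheory Real

/-!
The law of `X₁ X₂` is computed as a Mellin convolution. Writing `f₁`, `f₂` for the two densities,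
independence, Tonelli and the substitution `y = x t` in the inner integral show that the product
has density `y ↦ ∫ f₂(t) f₁(y / t) / |t| dt` (`lintegral_mul_density`).
Here the powers of `t` cancel: for `t > 0` the integrand equals
`(1/2) e^(-y/2)` (for `y ≥ 0`) times the Gamma(`n - 1`, `1/2`) density evaluated at `t - y`
(`kernel_eq`), and the latter has total mass one.
-/

/-- The Mellin convolution formula for the expectation of a function of a product. -/
lemma lintegral_mul_density {f₁ f₂ g : ℝ → ENNReal} (h₁ : Measurable f₁) (h₂ : Measurable f₂)
    (hg : Measurable g) :
    ∫⁻ t, f₂ t * ∫⁻ x, f₁ x * g (x * t)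
      = ∫⁻ y, (∫⁻ t, f₂ t * (f₁ (y / t) * ENNReal.ofReal |t⁻¹|)) * g y := by
  have hscale : ∀ t : ℝ, t ≠ 0 → ∫⁻ x, f₁ x * g (x * t)
      = ENNReal.ofReal |t⁻¹| * ∫⁻ y, f₁ (y / t) * g y := by
    intro t ht
    have hm : Measurable fun y => f₁ (y / t) * g y := by fun_prop
    rw [← smul_eq_mul, ← lintegral_smul_measure, ← Real.map_volume_mul_right ht,
      lintegral_map hm (by fun_prop)]
    simp [ht]
  calc ∫⁻ t, f₂ t * ∫⁻ x, f₁ x * g (x * t)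
      = ∫⁻ t, ∫⁻ y, f₂ t * (f₁ (y / t) * ENNReal.ofReal |t⁻¹|) * g y := by
        refine lintegral_congr_ae ?_
        filter_upwards [Measure.ae_ne volume (0 : ℝ)] with t ht
        rw [hscale t ht, ← lintegral_const_mul _ (by fun_prop),
          ← lintegral_const_mul _ (by fun_prop)]
        exact lintegral_congr fun y => by ring
    _ = ∫⁻ y, ∫⁻ t, f₂ t * (f₁ (y / t) * ENNReal.ofReal |t⁻¹|) * g y :=
        lintegral_lintegral_swap (by fun_prop)
    _ = _ := by
        refine lintegral_congr fun y => ?_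
        rw [lintegral_mul_const _ (by fun_prop)]

/-- The integrand of the Mellin convolution is a multiple of a shifted Gamma density.
At `t = 0 = y` and `n = 2` the two sides differ, hence `t ≠ 0`. -/
lemma kernel_eq (n : ℕ) (hn : 2 ≤ n) (y t : ℝ) (ht : t ≠ 0) :
    ENNReal.ofReal
        (if 0 ≤ t then t ^ (n - 1) * Real.exp (-t / 2) / (2 ^ n * ((n - 1).factorial : ℝ)) else 0)
      * (ENNReal.ofReal
          (if y / t ∈ Set.Icc (0 : ℝ) 1 then ((n : ℝ) - 1) * (1 - y / t) ^ (n - 2) else 0)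
        * ENNReal.ofReal |t⁻¹|)
    = ENNReal.ofReal (if 0 ≤ y then (1 / 2) * Real.exp (-y / 2) else 0)
      * gammaPDF ((n : ℝ) - 1) (1 / 2) (t - y) := by
  obtain ⟨k, rfl⟩ := Nat.exists_eq_add_of_le' hn
  have e1 : k + 2 - 1 = k + 1 := rfl
  have e2 : k + 2 - 2 = k := rfl
  have e3 : ((k + 2 : ℕ) : ℝ) - 1 = k + 1 := by push_cast; ring
  rw [e1, e2, e3, gammaPDF_eq]
  rcases lt_or_gt_of_ne ht with htn | htp
  · rw [if_neg htn.not_ge]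
    by_cases hy : 0 ≤ y
    · rw [if_neg (show ¬ 0 ≤ t - y by linarith)]; simp
    · rw [if_neg hy]; simp
  · rw [if_pos htp.le]
    by_cases hy : 0 ≤ y
    · rw [if_pos hy]
      by_cases hyt : y ≤ t
      · have hnn : 0 ≤ 1 - y / t := sub_nonneg.2 ((div_le_one htp).2 hyt)
        rw [if_pos ⟨by positivity, (div_le_one htp).2 hyt⟩, if_pos (sub_nonneg.2 hyt),
          ← ENNReal.ofReal_mul (by positivity), ← ENNReal.ofReal_mul (by positivity),
          ← ENNReal.ofReal_mul (by positivity), abs_of_pos (inv_pos.2 htp)]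
        congr 1
        have hexp : Real.exp (-t / 2) = Real.exp (-y / 2) * Real.exp (-(1 / 2 * (t - y))) := by
          rw [← Real.exp_add]; congr 1; ring
        have hpow : (t - y) ^ k = t ^ k * (1 - y / t) ^ k := by
          rw [← mul_pow]; congr 1; field_simp
        rw [hexp, add_sub_cancel_right, Real.rpow_natCast, hpow, Real.Gamma_nat_eq_factorial,
          Nat.factorial_succ]
        rw [show (k : ℝ) + 1 = ((k + 1 : ℕ) : ℝ) by push_cast; rfl, Real.rpow_natCast]
        have := Nat.factorial_ne_zero k
        rw [one_div_pow]
        push_cast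
        field_simp
        ring
      · rw [if_neg (fun h => hyt ((div_le_one htp).1 h.2)),
          if_neg (show ¬ 0 ≤ t - y by linarith)]
        simp
    · rw [if_neg hy, if_neg (fun h => hy (by simpa [htp.ne'] using mul_nonneg h.1 htp.le))]
      simp

/-- Appendix A of the paper: if `X₁ ∼ Beta(1, n−1)` (density `(n−1)(1−x)^(n−2)` on `[0,1]`)
and `X₂ ∼ χ²(2n)` (density `t^(n−1) e^(−t/2) / (2^n (n−1)!)` on `[0,∞)`) are independent,
then the product `X₁ · X₂` is exponentially distributed with rate `1/2`, i.e. it has density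
`(1/2) e^(−x/2)` on `[0,∞)`. -/
theorem stmt_1 {Ω : Type*} [MeasurableSpace Ω] (μ : Measure Ω) [IsProbabilityMeasure μ]
    (n : ℕ) (hn : 2 ≤ n) (X₁ X₂ : Ω → ℝ)
    (hX₁ : Measurable X₁) (hX₂ : Measurable X₂)
    (hindep : IndepFun X₁ X₂ μ)
    (hd₁ : μ.map X₁ = volume.withDensity
      (fun x => ENNReal.ofReal
        (if x ∈ Set.Icc (0 : ℝ) 1 then ((n : ℝ) - 1) * (1 - x) ^ (n - 2) else 0)))
    (hd₂ : μ.map X₂ = volume.withDensity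
      (fun t => ENNReal.ofReal
        (if 0 ≤ t then t ^ (n - 1) * Real.exp (-t / 2) / (2 ^ n * ((n - 1).factorial : ℝ))
         else 0))) :
    μ.map (fun ω => X₁ ω * X₂ ω) = volume.withDensity
      (fun x => ENNReal.ofReal (if 0 ≤ x then (1 / 2) * Real.exp (-x / 2) else 0)) := by
  have m₁ : Measurable fun x : ℝ => ENNReal.ofReal
      (if x ∈ Set.Icc (0 : ℝ) 1 then ((n : ℝ) - 1) * (1 - x) ^ (n - 2) else 0) :=
    (Measurable.ite measurableSet_Icc (by fun_prop) (by fun_prop)).ennreal_ofReal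
  have m₂ : Measurable fun t : ℝ => ENNReal.ofReal
      (if 0 ≤ t then t ^ (n - 1) * Real.exp (-t / 2) / (2 ^ n * ((n - 1).factorial : ℝ))
        else 0) :=
    (Measurable.ite measurableSet_Ici (by fun_prop) (by fun_prop)).ennreal_ofReal
  have m₃ : Measurable fun x : ℝ => ENNReal.ofReal
      (if 0 ≤ x then (1 / 2) * Real.exp (-x / 2) else 0) :=
    (Measurable.ite measurableSet_Ici (by fun_prop) (by fun_prop)).ennreal_ofReal
  have hn' : (0 : ℝ) < (n : ℝ) - 1 := by
    have : (2 : ℝ) ≤ n := by exact_mod_cast hn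
    linarith
  have hprod := (indepFun_iff_map_prod_eq_prod_map_map hX₁.aemeasurable hX₂.aemeasurable).1 hindep
  have := Measure.isProbabilityMeasure_map (μ := μ) hX₁.aemeasurable
  have := Measure.isProbabilityMeasure_map (μ := μ) hX₂.aemeasurable
  refine Measure.ext_of_lintegral _ fun g hg => ?_
  have hmap : μ.map (fun ω => X₁ ω * X₂ ω)
      = ((μ.map X₁).prod (μ.map X₂)).map (fun p => p.1 * p.2) := by
    rw [← hprod, Measure.map_map (by fun_prop) (by fun_prop)]
    rfl
  rw [hmap, lintegral_map hg (by fun_prop), lintegral_prod_symm _ (by fun_prop)]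
  have hmg : Measurable fun t => ∫⁻ x, g (x * t) ∂(μ.map X₁) :=
    Measurable.lintegral_prod_left' (f := fun p : ℝ × ℝ => g (p.1 * p.2)) (by fun_prop)
  rw [hd₂, lintegral_withDensity_eq_lintegral_mul _ m₂ hmg,
    lintegral_withDensity_eq_lintegral_mul _ m₃ hg, hd₁]
  simp only [Pi.mul_apply]
  have hinner : ∀ t : ℝ, _ = _ := fun t =>
    lintegral_withDensity_eq_lintegral_mul volume m₁ (hg.comp (measurable_mul_const t))
  simp only [Function.comp_def, Pi.mul_apply] at hinner
  simp only [hinner]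
  rw [lintegral_mul_density m₁ m₂ hg]
  refine lintegral_congr fun y => ?_
  congr 1
  rw [lintegral_congr_ae (g := fun t => ENNReal.ofReal
      (if 0 ≤ y then (1 / 2) * Real.exp (-y / 2) else 0)
        * gammaPDF ((n : ℝ) - 1) (1 / 2) (t - y))]
  · have mG : Measurable (gammaPDF ((n : ℝ) - 1) (1 / 2)) :=
      (measurable_gammaPDFReal _ _).ennreal_ofReal
    rw [lintegral_const_mul _ (by fun_prop),
      lintegral_sub_right_eq_self (gammaPDF ((n : ℝ) - 1) (1 / 2)) y,
      lintegral_gammaPDF_eq_one hn' (by norm_num), mul_one]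
  · filter_upwards [Measure.ae_ne volume (0 : ℝ)] with t ht
    exact kernel_eq n hn y t ht
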